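/- Let r ∈ ℝ^m and c ∈ ℝ^n be vectors of positive reals with Σ_i r_i = Σ_j c_j, and let I ⊊ {1,…,m}, J ⊊ {1,…,n} be nonempty proper subsets with Σ_{i ∈ I} r_i = Σ_{j ∈ J} c_j. Let (i,j) ∈ I × J, and suppose there exists a matrix A′ in the I×J transportation polytope (with marginals (r_i)_{i∈I}, (c_j)_{j∈J}) such that A′_{ij} = 0 and all other entries of A′ are strictly positive. Then there exists A ∈ T_{rc} with A_{ij} = 0 and all other entries of A strictly positive. (Hence if a_{ij} ≥ 0 defines a facet of the I×J transportation polytope, it also defines a facet of T_{rc}.) -/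

import Mathlib

/-!
Let `T = ∑ r = ∑ c` and `R = ∑_{I} r = ∑_{J} c`. The matrix with entries `r k * c l / T` is a
positive point of `T_{rc}`, and its `I × J` block has row sums `(R / T) * r k` and column sums
`(R / T) * c l`. The matrix `(R / T) • A'` has the same marginals, so it may be substituted for that
block; the result vanishes exactly where `A'` does.
-/

variable {ι κ α 𝕜 : Type*}

/-- The transportation polytope `T_{rc}`: nonnegative matrices with row sums `r` and column
sums `c`. The index types are arbitrary finite types, so that the `I × J` polytope is an instance
with index types the subtypes of `I` and `J`. -/
def transportationPolytope [Fintype ι] [Fintype κ] [AddCommMonoid α] [LE α]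
    (r : ι → α) (c : κ → α) : Set (Matrix ι κ α) :=
  {A | (∀ k l, 0 ≤ A k l) ∧ (∀ k, ∑ l, A k l = r k) ∧ ∀ l, ∑ k, A k l = c l}

/-- The inequality `a i j ≥ 0` defines a facet of `transportationPolytope r c`, encoded by the
existence of a point whose only vanishing entry is the one at `(i, j)`. -/
def DefinesFacet [Fintype ι] [Fintype κ] [AddCommMonoid α] [Preorder α]
    (r : ι → α) (c : κ → α) (i : ι) (j : κ) : Prop :=
  ∃ A ∈ transportationPolytope r c, A i j = 0 ∧ ∀ k l, (k, l) ≠ (i, j) → 0 < A k l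

/-- The matrix `M` with its `I × J` block overwritten by `B`. -/
def replaceBlock [DecidableEq ι] [DecidableEq κ] {I : Finset ι} {J : Finset κ}
    (M : Matrix ι κ α) (B : Matrix I J α) : Matrix ι κ α :=
  fun k l => if h : k ∈ I ∧ l ∈ J then B ⟨k, h.1⟩ ⟨l, h.2⟩ else M k l

/-- The matrix `r cᵀ / ∑ r`: up to scaling, the joint distribution of independent variables with
marginals `r` and `c`. It provides a positive point of the transportation polytope. -/
def independenceMatrix [Fintype ι] [Semifield 𝕜] (r : ι → 𝕜) (c : κ → 𝕜) : Matrix ι κ 𝕜 :=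
  fun k l => r k * c l / ∑ i, r i

section ReplaceBlock

variable [DecidableEq ι] [DecidableEq κ] {I : Finset ι} {J : Finset κ}
  {M : Matrix ι κ α} {B : Matrix I J α} {k : ι} {l : κ}

theorem replaceBlock_apply_of_mem (hk : k ∈ I) (hl : l ∈ J) :
    replaceBlock M B k l = B ⟨k, hk⟩ ⟨l, hl⟩ :=
  dif_pos ⟨hk, hl⟩

theorem replaceBlock_apply_of_notMem (h : ¬(k ∈ I ∧ l ∈ J)) :
    replaceBlock M B k l = M k l :=
  dif_neg h

theorem transpose_replaceBlock :
    (replaceBlock M B).transpose = replaceBlock M.transpose B.transpose := by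
  ext l k
  simp only [replaceBlock, Matrix.transpose_apply, and_comm]

variable [AddCommMonoid α]

theorem sum_replaceBlock_row [Fintype κ]
    (hB : ∀ k : I, ∑ l, B k l = ∑ l ∈ J, M k l) (k : ι) :
    ∑ l, replaceBlock M B k l = ∑ l, M k l := by
  by_cases hk : k ∈ I
  · have sum_block : ∑ l ∈ J, replaceBlock M B k l = ∑ l ∈ J, M k l := by
      rw [← hB ⟨k, hk⟩, ← Finset.sum_coe_sort J]
      exact Finset.sum_congr rfl fun l _ => replaceBlock_apply_of_mem hk l.2
    have sum_rest : ∑ l ∈ Jᶜ, replaceBlock M B k l = ∑ l ∈ Jᶜ, M k l :=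
      Finset.sum_congr rfl fun l hl =>
        replaceBlock_apply_of_notMem fun h => Finset.mem_compl.1 hl h.2
    rw [← Finset.sum_add_sum_compl J, sum_block, sum_rest, Finset.sum_add_sum_compl]
  · exact Finset.sum_congr rfl fun l _ => replaceBlock_apply_of_notMem fun h => hk h.1

theorem sum_replaceBlock_col [Fintype ι]
    (hB : ∀ l : J, ∑ k, B k l = ∑ k ∈ I, M k l) (l : κ) :
    ∑ k, replaceBlock M B k l = ∑ k, M k l := by
  simpa only [← transpose_replaceBlock, Matrix.transpose_apply] using
    sum_replaceBlock_row (M := M.transpose) (B := B.transpose) hB l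

theorem replaceBlock_mem_transportationPolytope [Fintype ι] [Fintype κ] [LE α]
    {r : ι → α} {c : κ → α} (hM : M ∈ transportationPolytope r c)
    (hB : B ∈ transportationPolytope (fun k : I => ∑ l ∈ J, M k l)
      (fun l : J => ∑ k ∈ I, M k l)) :
    replaceBlock M B ∈ transportationPolytope r c := by
  obtain ⟨M_nonneg, M_row, M_col⟩ := hM
  obtain ⟨B_nonneg, B_row, B_col⟩ := hB
  refine ⟨fun k l => ?_, fun k => (sum_replaceBlock_row B_row k).trans (M_row k),
    fun l => (sum_replaceBlock_col B_col l).trans (M_col l)⟩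
  unfold replaceBlock
  split_ifs
  exacts [B_nonneg _ _, M_nonneg _ _]

end ReplaceBlock

section TransportationPolytope

variable [Fintype ι] [Fintype κ]

theorem sum_eq_sum_of_mem_transportationPolytope [AddCommMonoid α] [LE α]
    {r : ι → α} {c : κ → α} {A : Matrix ι κ α} (hA : A ∈ transportationPolytope r c) :
    ∑ k, r k = ∑ l, c l := by
  obtain ⟨-, A_row, A_col⟩ := hA
  simp only [← A_row, ← A_col]
  exact Finset.sum_comm

theorem smul_mem_transportationPolytope [Semiring α] [PartialOrder α] [IsOrderedRing α]
    {r : ι → α} {c : κ → α} {A : Matrix ι κ α} {a : α} (ha : 0 ≤ a)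
    (hA : A ∈ transportationPolytope r c) :
    a • A ∈ transportationPolytope (a • r) (a • c) := by
  obtain ⟨A_nonneg, A_row, A_col⟩ := hA
  refine ⟨fun k l => mul_nonneg ha (A_nonneg k l), fun k => ?_, fun l => ?_⟩
  · simp only [Matrix.smul_apply, ← Finset.smul_sum, A_row, Pi.smul_apply]
  · simp only [Matrix.smul_apply, ← Finset.smul_sum, A_col, Pi.smul_apply]

end TransportationPolytope

section IndependenceMatrix

variable [Fintype ι] [Semifield 𝕜] {r : ι → 𝕜} {c : κ → 𝕜}

theorem sum_independenceMatrix_row (J : Finset κ) (k : ι) :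
    ∑ l ∈ J, independenceMatrix r c k l = (∑ l ∈ J, c l) / (∑ i, r i) * r k := by
  simp only [independenceMatrix, ← Finset.sum_div, ← Finset.mul_sum]
  ring

theorem sum_independenceMatrix_col (I : Finset ι) (l : κ) :
    ∑ k ∈ I, independenceMatrix r c k l = (∑ k ∈ I, r k) / (∑ i, r i) * c l := by
  simp only [independenceMatrix, ← Finset.sum_div, ← Finset.sum_mul]
  ring

variable [LinearOrder 𝕜] [IsStrictOrderedRing 𝕜]

theorem independenceMatrix_pos (hr : ∀ k, 0 < r k) (hc : ∀ l, 0 < c l) (k : ι) (l : κ) :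
    0 < independenceMatrix r c k l :=
  div_pos (mul_pos (hr k) (hc l)) (Finset.sum_pos (fun i _ => hr i) ⟨k, Finset.mem_univ k⟩)

theorem independenceMatrix_mem_transportationPolytope [Fintype κ]
    (hr : ∀ k, 0 ≤ r k) (hc : ∀ l, 0 ≤ c l) (hs : ∑ k, r k = ∑ l, c l) (h0 : ∑ k, r k ≠ 0) :
    independenceMatrix r c ∈ transportationPolytope r c := by
  refine ⟨fun k l => ?_, fun k => ?_, fun l => ?_⟩
  · exact div_nonneg (mul_nonneg (hr k) (hc l)) (Finset.sum_nonneg fun i _ => hr i)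
  · rw [sum_independenceMatrix_row, ← hs, div_self h0, one_mul]
  · rw [sum_independenceMatrix_col, div_self h0, one_mul]

end IndependenceMatrix

theorem replaceBlock_independenceMatrix_mem_transportationPolytope
    [Fintype ι] [Fintype κ] [DecidableEq ι] [DecidableEq κ]
    [Semifield 𝕜] [LinearOrder 𝕜] [IsStrictOrderedRing 𝕜] {r : ι → 𝕜} {c : κ → 𝕜}
    (hr : ∀ k, 0 ≤ r k) (hc : ∀ l, 0 ≤ c l) (hs : ∑ k, r k = ∑ l, c l) (h0 : ∑ k, r k ≠ 0)
    {I : Finset ι} {J : Finset κ} {B : Matrix I J 𝕜}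
    (hB : B ∈ transportationPolytope (fun k : I => r k) (fun l : J => c l)) :
    replaceBlock (independenceMatrix r c) (((∑ k ∈ I, r k) / ∑ k, r k) • B) ∈
      transportationPolytope r c := by
  have hIJ : ∑ k ∈ I, r k = ∑ l ∈ J, c l := by
    simpa only [Finset.sum_coe_sort] using sum_eq_sum_of_mem_transportationPolytope hB
  have ratio_nonneg : 0 ≤ (∑ k ∈ I, r k) / ∑ k, r k :=
    div_nonneg (Finset.sum_nonneg fun k _ => hr k) (Finset.sum_nonneg fun k _ => hr k)
  refine replaceBlock_mem_transportationPolytope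
    (independenceMatrix_mem_transportationPolytope hr hc hs h0) ?_
  simp only [sum_independenceMatrix_row, sum_independenceMatrix_col, ← hIJ]
  exact smul_mem_transportationPolytope ratio_nonneg hB

theorem stmt13_general [Fintype ι] [Fintype κ]
    [Semifield 𝕜] [LinearOrder 𝕜] [IsStrictOrderedRing 𝕜] {r : ι → 𝕜} {c : κ → 𝕜}
    (hr : ∀ k, 0 < r k) (hc : ∀ l, 0 < c l) (hs : ∑ k, r k = ∑ l, c l)
    {I : Finset ι} {J : Finset κ} {i : I} {j : J}
    (hfacet : DefinesFacet (fun k : I => r k) (fun l : J => c l) i j) :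
    DefinesFacet r c i j := by
  classical
  obtain ⟨B, B_mem, B_zero, B_pos⟩ := hfacet
  have block_pos : 0 < ∑ k ∈ I, r k := Finset.sum_pos (fun k _ => hr k) ⟨i, i.2⟩
  have total_pos : 0 < ∑ k, r k := Finset.sum_pos (fun k _ => hr k) ⟨i, Finset.mem_univ _⟩
  refine ⟨_, replaceBlock_independenceMatrix_mem_transportationPolytope
    (fun k => (hr k).le) (fun l => (hc l).le) hs total_pos.ne' B_mem, ?_, fun k l hkl => ?_⟩
  · rw [replaceBlock_apply_of_mem i.2 j.2, Matrix.smul_apply, B_zero, smul_zero]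
  · by_cases h : k ∈ I ∧ l ∈ J
    · rw [replaceBlock_apply_of_mem h.1 h.2]
      refine mul_pos (div_pos block_pos total_pos) (B_pos _ _ fun heq => hkl ?_)
      exact congrArg (Prod.map Subtype.val Subtype.val) heq
    · rw [replaceBlock_apply_of_notMem h]
      exact independenceMatrix_pos hr hc k l

/-- If `a_{ij} ≥ 0` (with `(i,j) ∈ I × J`) defines a facet of the `I × J`
transportation polytope — witnessed by a point `A'` of that polytope with
`(i,j)`-entry `0` and all other entries positive — then it defines a facet of
`T_{rc}`: there is `A ∈ T_{rc}` with `A_{ij} = 0` and all other entries positive. -/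
theorem stmt13 (m n : ℕ) (r : Fin m → ℝ) (c : Fin n → ℝ)
    (hr : ∀ i, 0 < r i) (hc : ∀ j, 0 < c j) (hs : ∑ i, r i = ∑ j, c j)
    (I : Finset (Fin m)) (J : Finset (Fin n))
    (hI : I.Nonempty) (hI' : I ≠ Finset.univ) (hJ : J.Nonempty) (hJ' : J ≠ Finset.univ)
    (hIJ : ∑ i ∈ I, r i = ∑ j ∈ J, c j)
    (i : Fin m) (j : Fin n) (hiI : i ∈ I) (hjJ : j ∈ J)
    (A' : Matrix {i // i ∈ I} {j // j ∈ J} ℝ)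
    (hA'0 : ∀ k l, 0 ≤ A' k l)
    (hA'r : ∀ k, ∑ l, A' k l = r k.1) (hA'c : ∀ l, ∑ k, A' k l = c l.1)
    (hA'ij : A' ⟨i, hiI⟩ ⟨j, hjJ⟩ = 0)
    (hA'pos : ∀ k l, (k.1, l.1) ≠ (i, j) → 0 < A' k l) :
    ∃ A : Matrix (Fin m) (Fin n) ℝ,
      (∀ k l, 0 ≤ A k l) ∧ (∀ k, ∑ l, A k l = r k) ∧ (∀ l, ∑ k, A k l = c l) ∧
      A i j = 0 ∧ (∀ k l, (k, l) ≠ (i, j) → 0 < A k l) := by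
  obtain ⟨A, ⟨A_nonneg, A_row, A_col⟩, A_zero, A_pos⟩ :=
    stmt13_general hr hc hs ⟨A', ⟨hA'0, hA'r, hA'c⟩, hA'ij, fun k l hkl => hA'pos k l fun h =>
      hkl (Prod.ext (Subtype.ext (congrArg Prod.fst h)) (Subtype.ext (congrArg Prod.snd h)))⟩
  exact ⟨A, A_nonneg, A_row, A_col, A_zero, A_pos⟩
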